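/- Let d, r ∈ ℕ with r ≥ 1, let γ > 0 be real, let α > 9/2 be real, and let v̂ : ℤ^d → ℂ satisfy ‖v̂‖_α < ∞. Then there exists a constant c₂ > 0, depending only on d, α, γ and v̂ (in particular independent of the moduli, the generating vectors, the anti-aliasing family and the vector y), such that for all moduli n_1,…,n_r ≥ 1, all generating vectors z_1,…,z_r ∈ ℤ^d, every minimal anti-aliasing family (h_ξ)_{ξ ∈ ℤ_{n_1}×⋯×ℤ_{n_r}}, and every y ∈ ℂ^{ℤ_{n_1}×⋯×ℤ_{n_r}}: ‖(D(DW − WD) − (DW − WD)D) y‖₂ ≤ c₂ · ‖(D + I)² y‖₂, where D, W are the matrices defined in the context and I is the identity matrix. -/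

import Mathlib

noncomputable section

/-- Integer dot product on `ℤ^d`. -/
def dotZ {d : ℕ} (h z : Fin d → ℤ) : ℤ := ∑ i, h i * z i

/-- The squared Korobov weight `r_α(h)² = ∏_j max(|h_j|^(2α), 1)`. -/
def korWeightSq {d : ℕ} (α : ℝ) (h : Fin d → ℤ) : ℝ :=
  ∏ j, max (|(h j : ℝ)| ^ (2 * α)) 1

/-- The squared Euclidean norm `‖h‖₂² = Σ_j h_j²` of `h ∈ ℤ^d`. -/
def normSq {d : ℕ} (h : Fin d → ℤ) : ℝ := ∑ j, (h j : ℝ) ^ 2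

/-- The Euclidean norm of a complex vector. -/
def vecNorm {ι : Type*} [Fintype ι] (y : ι → ℂ) : ℝ := Real.sqrt (∑ ξ, ‖y ξ‖ ^ 2)

/-- The diagonal matrix `D` with entries `2π²γ‖h_ξ‖₂²`, indexed by the
multi-indices `ξ ∈ ℤ_{n_1} × ⋯ × ℤ_{n_r}`. -/
def DmatR {d r : ℕ} (γ : ℝ) (n : Fin r → ℕ)
    (hfam : ((j : Fin r) → Fin (n j)) → Fin d → ℤ) :
    Matrix ((j : Fin r) → Fin (n j)) ((j : Fin r) → Fin (n j)) ℂ :=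
  Matrix.diagonal fun ξ => ((2 * Real.pi ^ 2 * γ * normSq (hfam ξ) : ℝ) : ℂ)

/-- The multiplication matrix `W` with entries
`W_{ξ,ξ'} = (1/γ) Σ_{h·z_j ≡ ξ_j−ξ'_j (mod n_j) ∀j} v̂(h)`. -/
def WmatR {d r : ℕ} (γ : ℝ) (vhat : (Fin d → ℤ) → ℂ) (n : Fin r → ℕ)
    (z : Fin r → Fin d → ℤ) :
    Matrix ((j : Fin r) → Fin (n j)) ((j : Fin r) → Fin (n j)) ℂ :=
  Matrix.of fun ξ ξ' => (1 / (γ : ℂ)) *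
    ∑' h : {h : Fin d → ℤ // ∀ j,
        ((dotZ h (z j) : ZMod (n j))) = ((ξ j : ℕ) : ZMod (n j)) - ((ξ' j : ℕ) : ZMod (n j))},
      vhat h.1

/-- `∏_j max(|h_j|, 1)`. -/
def PP {d : ℕ} (h : Fin d → ℤ) : ℝ := ∏ j, max |(h j : ℝ)| 1

lemma one_le_PP {d : ℕ} (h : Fin d → ℤ) : 1 ≤ PP h := by
  unfold PP
  refine le_trans (le_of_eq ?_) (Finset.prod_le_prod (s := Finset.univ) (f := fun _ => (1 : ℝ))
    (fun _ _ => zero_le_one) (fun _ _ => le_max_right _ _))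
  simp

lemma abs_le_PP {d : ℕ} (h : Fin d → ℤ) (j : Fin d) : |(h j : ℝ)| ≤ PP h := by
  refine (le_max_left _ 1).trans ?_
  unfold PP
  rw [← Finset.mul_prod_erase _ _ (Finset.mem_univ j)]
  refine le_mul_of_one_le_right (by positivity) ?_
  refine le_trans (le_of_eq ?_) (Finset.prod_le_prod (s := Finset.univ.erase j)
    (f := fun _ => (1 : ℝ)) (fun _ _ => zero_le_one) (fun _ _ => le_max_right _ _))
  simp

lemma PP_rpow {d : ℕ} (h : Fin d → ℤ) (s : ℝ) :
    PP h ^ s = ∏ j, (max |(h j : ℝ)| 1) ^ s := by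
  unfold PP
  exact (Real.finsetProd_rpow _ _ (fun _ _ => by positivity) s).symm

lemma korWeightSq_eq {d : ℕ} {α : ℝ} (hα : 0 < α) (h : Fin d → ℤ) :
    korWeightSq α h = PP h ^ (2 * α) := by
  rw [PP_rpow]
  unfold korWeightSq
  refine Finset.prod_congr rfl fun j _ => ?_
  rcases le_total |(h j : ℝ)| 1 with hh | hh
  · rw [max_eq_right hh, Real.one_rpow, max_eq_right]
    exact Real.rpow_le_one (abs_nonneg _) hh (by positivity)
  · rw [max_eq_left hh, max_eq_left]
    exact Real.one_le_rpow hh (by positivity)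

lemma summable_one {b : ℝ} (hb : 1 < b) :
    Summable fun k : ℤ => (max |(k : ℝ)| 1) ^ (-b) := by
  have h1 := Real.summable_abs_int_rpow hb
  refine (summable_congr_cofinite ?_).mp h1
  have : ({0}ᶜ : Set ℤ) ∈ Filter.cofinite := (Set.finite_singleton 0).compl_mem_cofinite
  filter_upwards [this] with k hk
  have hk' : k ≠ 0 := by simpa using hk
  rw [max_eq_left]
  exact_mod_cast Int.one_le_abs hk'

lemma summable_pi (f : ℤ → ℝ) (hf : Summable f) (h0 : ∀ k, 0 ≤ f k) (d : ℕ) :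
    Summable fun h : Fin d → ℤ => ∏ j, f (h j) := by
  induction d with
  | zero => exact Summable.of_finite
  | succ d ih =>
    have := hf.mul_of_nonneg ih h0 (fun h => Finset.prod_nonneg fun j _ => h0 _)
    rw [← (Fin.consEquiv (fun _ : Fin (d+1) => ℤ)).summable_iff]
    refine this.congr fun p => ?_
    simp [Fin.prod_univ_succ, Fin.consEquiv]

lemma summable_g {d : ℕ} {α : ℝ} (hα : 9 / 2 < α) (vhat : (Fin d → ℤ) → ℂ)
    (hv : Summable fun h : Fin d → ℤ => ‖vhat h‖ ^ 2 * korWeightSq α h) :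
    Summable fun h : Fin d → ℤ => ‖vhat h‖ * PP h ^ 4 := by
  have h1 : Summable fun h : Fin d → ℤ => PP h ^ (-(2 * α - 8)) := by
    refine (summable_pi _ (summable_one (b := 2 * α - 8) (by linarith)) (fun k => by positivity) d).congr
      fun h => ?_
    rw [PP_rpow]
  refine Summable.of_nonneg_of_le (fun h => ?_) (fun h => ?_) (hv.add h1)
  · have := one_le_PP h
    positivity
  · have hP : 0 < PP h := zero_lt_one.trans_le (one_le_PP h)
    rw [korWeightSq_eq (by linarith)]
    have e1 : PP h ^ (2 * α) = (PP h ^ α) ^ 2 := by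
      rw [← Real.rpow_natCast, ← Real.rpow_mul hP.le]; congr 1; push_cast; ring
    have e2 : PP h ^ (-(2 * α - 8)) = (PP h ^ (4 - α)) ^ 2 := by
      rw [← Real.rpow_natCast, ← Real.rpow_mul hP.le]; congr 1; push_cast; ring
    have e3 : PP h ^ 4 = PP h ^ α * PP h ^ (4 - α) := by
      rw [← Real.rpow_add hP, ← Real.rpow_natCast]; congr 1; push_cast; ring
    rw [e1, e2, e3]
    have := Real.rpow_pos_of_pos hP α
    have := Real.rpow_pos_of_pos hP (4 - α)
    nlinarith [sq_nonneg (‖vhat h‖ * PP h ^ α - PP h ^ (4 - α)), norm_nonneg (vhat h),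
      sq_nonneg (‖vhat h‖ * PP h ^ α), sq_nonneg (PP h ^ (4 - α))]

/-- Euclidean norm. -/
def nm {d : ℕ} (h : Fin d → ℤ) : ℝ := Real.sqrt (normSq h)

lemma normSq_nonneg {d : ℕ} (h : Fin d → ℤ) : 0 ≤ normSq h :=
  Finset.sum_nonneg fun _ _ => sq_nonneg _

lemma nm_sq {d : ℕ} (h : Fin d → ℤ) : nm h ^ 2 = normSq h := Real.sq_sqrt (normSq_nonneg h)

lemma nm_eq {d : ℕ} (h : Fin d → ℤ) :
    nm h = ‖(WithLp.toLp 2 (fun j => (h j : ℝ)) : EuclideanSpace ℝ (Fin d))‖ := by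
  simp [nm, normSq, EuclideanSpace.norm_eq]

lemma nm_add {d : ℕ} (h k : Fin d → ℤ) : nm (h + k) ≤ nm h + nm k := by
  rw [nm_eq, nm_eq, nm_eq]
  refine le_trans (le_of_eq ?_) (norm_add_le _ _)
  congr 1
  ext j
  simp

lemma nm_sub {d : ℕ} (h k : Fin d → ℤ) : nm (h - k) ≤ nm h + nm k := by
  rw [nm_eq, nm_eq, nm_eq]
  refine le_trans (le_of_eq ?_) (norm_sub_le _ _)
  congr 1
  ext j
  simp

lemma nm_le {d : ℕ} (h : Fin d → ℤ) : 1 + nm h ≤ (1 + d) * PP h := by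
  have hP := one_le_PP h
  have : nm h ≤ d * PP h := by
    unfold nm
    refine Real.sqrt_le_iff.mpr ⟨by positivity, ?_⟩
    have : normSq h ≤ d * PP h ^ 2 := by
      unfold normSq
      refine (Finset.sum_le_sum (g := fun _ => PP h ^ 2) fun j _ => ?_).trans (by simp)
      rw [← sq_abs]
      exact pow_le_pow_left₀ (abs_nonneg _) (abs_le_PP h j) 2
    refine this.trans ?_
    rw [mul_pow]
    refine mul_le_mul_of_nonneg_right ?_ (by positivity)
    exact_mod_cast Nat.le_self_pow (by norm_num) d
  linarith

lemma key {τ a b m Q e : ℝ} (hτ : 0 < τ) (ha : 0 ≤ a) (hb : 0 ≤ b) (hm : 0 ≤ m)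
    (h1 : a ≤ b + m) (h2 : b ≤ a + m) (hQ : 1 + m ≤ e * Q) :
    (τ * a ^ 2 - τ * b ^ 2) ^ 2 ≤ 8 * τ ^ 2 * (1 + 1 / τ) * e ^ 4 * (1 + τ * b ^ 2) ^ 2 * Q ^ 4 := by
  have s1 : (a - b) ^ 2 ≤ m ^ 2 := sq_le_sq' (by linarith) (by linarith)
  have s2 : (a + b) ^ 2 ≤ (2 * b + m) ^ 2 := pow_le_pow_left₀ (by linarith) (by linarith) 2
  have s3 : (2 * b + m) ^ 2 ≤ (2 * ((1 + m) * (1 + b))) ^ 2 :=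
    pow_le_pow_left₀ (by linarith) (by nlinarith [mul_nonneg hm hb]) 2
  have s4 : m ^ 2 ≤ (1 + m) ^ 2 := pow_le_pow_left₀ hm (by linarith) 2
  have s5 : (1 + m) ^ 4 ≤ (e * Q) ^ 4 := pow_le_pow_left₀ (by linarith) hQ 4
  have s6 : (1 + b) ^ 2 ≤ 2 * (1 + 1 / τ) * (1 + τ * b ^ 2) ^ 2 := by
    have t1 : (1 + b) ^ 2 ≤ 2 * (1 + b ^ 2) := by nlinarith [sq_nonneg (1 - b)]
    have t2 : 1 + b ^ 2 ≤ (1 + 1 / τ) * (1 + τ * b ^ 2) := by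
      have : (1 + 1 / τ) * (1 + τ * b ^ 2) = 1 + b ^ 2 + 1 / τ + τ * b ^ 2 := by
        field_simp; ring
      rw [this]
      have : 0 < 1 / τ := by positivity
      have : 0 ≤ τ * b ^ 2 := by positivity
      linarith
    have t3 : (1 + τ * b ^ 2) ≤ (1 + τ * b ^ 2) ^ 2 := by
      have : 0 ≤ τ * b ^ 2 := by positivity
      nlinarith
    have t4 : 0 ≤ 1 + 1 / τ := by positivity
    have := mul_le_mul_of_nonneg_left t3 t4
    linarith
  calc (τ * a ^ 2 - τ * b ^ 2) ^ 2 = τ ^ 2 * ((a - b) ^ 2 * (a + b) ^ 2) := by ring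
    _ ≤ τ ^ 2 * ((1 + m) ^ 2 * (2 * ((1 + m) * (1 + b))) ^ 2) := by
        refine mul_le_mul_of_nonneg_left ?_ (by positivity)
        exact mul_le_mul (s1.trans s4) (s2.trans s3) (by positivity) (by positivity)
    _ = 4 * τ ^ 2 * ((1 + m) ^ 4 * (1 + b) ^ 2) := by ring
    _ ≤ 4 * τ ^ 2 * ((e * Q) ^ 4 * (2 * (1 + 1 / τ) * (1 + τ * b ^ 2) ^ 2)) := by
        refine mul_le_mul_of_nonneg_left ?_ (by positivity)
        exact mul_le_mul s5 s6 (by positivity) (by positivity)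
    _ = _ := by ring

lemma schur {ι : Type*} [Fintype ι] (M : Matrix ι ι ℂ) (G : ι → ι → ℝ) (w : ι → ℝ) (S : ℝ)
    (hG : ∀ i j, 0 ≤ G i j) (hS : 0 ≤ S)
    (hM : ∀ i j, ‖M i j‖ ≤ G i j * w j) (hrow : ∀ i, ∑ j, G i j ≤ S) (hcol : ∀ j, ∑ i, G i j ≤ S)
    (y u : ι → ℂ) (hu : ∀ j, w j * ‖y j‖ = ‖u j‖) :
    vecNorm (M.mulVec y) ≤ S * vecNorm u := by
  unfold vecNorm
  refine Real.sqrt_le_iff.mpr ⟨by positivity, ?_⟩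
  rw [mul_pow, Real.sq_sqrt (Finset.sum_nonneg fun _ _ => by positivity)]
  have h1 : ∀ i, ‖M.mulVec y i‖ ^ 2 ≤ S * ∑ j, G i j * ‖u j‖ ^ 2 := by
    intro i
    have a1 : ‖M.mulVec y i‖ ≤ ∑ j, G i j * ‖u j‖ := by
      unfold Matrix.mulVec dotProduct
      refine (norm_sum_le _ _).trans (Finset.sum_le_sum fun j _ => ?_)
      rw [norm_mul, ← hu, ← mul_assoc]
      exact mul_le_mul_of_nonneg_right (hM i j) (norm_nonneg _)
    have a2 : (∑ j, G i j * ‖u j‖) ^ 2 ≤ (∑ j, G i j) * ∑ j, G i j * ‖u j‖ ^ 2 := by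
      refine Finset.sum_sq_le_sum_mul_sum_of_sq_le_mul _ (fun j _ => hG i j)
        (fun j _ => mul_nonneg (hG i j) (sq_nonneg _)) (fun j _ => le_of_eq (by ring))
    refine (pow_le_pow_left₀ (norm_nonneg _) a1 2).trans (a2.trans ?_)
    exact mul_le_mul_of_nonneg_right (hrow i)
      (Finset.sum_nonneg fun j _ => mul_nonneg (hG i j) (sq_nonneg _))
  calc ∑ i, ‖M.mulVec y i‖ ^ 2 ≤ ∑ i, S * ∑ j, G i j * ‖u j‖ ^ 2 := Finset.sum_le_sum fun i _ => h1 i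
    _ = S * ∑ j, (∑ i, G i j) * ‖u j‖ ^ 2 := by
        rw [← Finset.mul_sum, Finset.sum_comm]
        simp_rw [Finset.sum_mul]
    _ ≤ S * ∑ j, S * ‖u j‖ ^ 2 := by
        refine mul_le_mul_of_nonneg_left (Finset.sum_le_sum fun j _ => ?_) hS
        exact mul_le_mul_of_nonneg_right (hcol j) (sq_nonneg _)
    _ = _ := by rw [← Finset.mul_sum]; ring

/-- Sums over pairwise disjoint classes are bounded by the full sum. -/
lemma sum_classes {ι X : Type*} [Fintype ι] (g : X → ℝ) (hg : Summable g) (h0 : ∀ x, 0 ≤ g x)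
    (s : ι → Set X) (hs : ∀ i j x, x ∈ s i → x ∈ s j → i = j) :
    ∑ i, ∑' x : s i, g x ≤ ∑' x, g x := by
  classical
  simp_rw [tsum_subtype]
  rw [← Summable.tsum_finsetSum (fun i _ => hg.indicator (s i))]
  refine Summable.tsum_le_tsum (fun x => ?_) (summable_sum fun i _ => hg.indicator (s i)) hg
  by_cases h : ∃ i, x ∈ s i
  · obtain ⟨i, hi⟩ := h
    rw [Finset.sum_eq_single i]
    · simp [hi]
    · intro j _ hj
      exact Set.indicator_of_notMem (fun hx => hj (hs j i x hx hi)) _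
    · simp
  · rw [Finset.sum_eq_zero]
    · exact h0 x
    · intro i _
      exact Set.indicator_of_notMem (fun hx => h ⟨i, hx⟩) _

lemma dotZ_add {d : ℕ} (h k z : Fin d → ℤ) : dotZ (h + k) z = dotZ h z + dotZ k z := by
  simp [dotZ, add_mul, Finset.sum_add_distrib]

lemma dotZ_sub {d : ℕ} (h k z : Fin d → ℤ) : dotZ (h - k) z = dotZ h z - dotZ k z := by
  simp [dotZ, sub_mul, Finset.sum_sub_distrib]

lemma fin_zmod_inj {m : ℕ} (a b : Fin m) (h : ((a : ℕ) : ZMod m) = ((b : ℕ) : ZMod m)) : a = b := by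
  rw [ZMod.natCast_eq_natCast_iff'] at h
  rw [Nat.mod_eq_of_lt a.2, Nat.mod_eq_of_lt b.2] at h
  exact Fin.ext h

/-- **Rank-r lattice second commutator bound.** For `α > 9/2` and `‖v̂‖_α < ∞`,
there is `c₂ > 0`, independent of the moduli, the generating vectors, the
minimal anti-aliasing family and `y`, such that
`‖[D,[D,W]] y‖₂ ≤ c₂ ‖(D + I)² y‖₂`. -/
theorem rankr_second_commutator_bound
    (d r : ℕ) (hr : 1 ≤ r) (γ : ℝ) (hγ : 0 < γ) (α : ℝ) (hα : 9 / 2 < α)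
    (vhat : (Fin d → ℤ) → ℂ)
    (hv : Summable fun h : Fin d → ℤ => ‖vhat h‖ ^ 2 * korWeightSq α h) :
    ∃ c₂ : ℝ, 0 < c₂ ∧
      ∀ (n : Fin r → ℕ), (∀ j, 1 ≤ n j) → ∀ (z : Fin r → Fin d → ℤ)
        (hfam : ((j : Fin r) → Fin (n j)) → Fin d → ℤ),
        (∀ ξ j, ((dotZ (hfam ξ) (z j) : ZMod (n j))) = ((ξ j : ℕ) : ZMod (n j))) →
        (∀ ξ (h : Fin d → ℤ),
            (∀ j, ((dotZ h (z j) : ZMod (n j))) = ((ξ j : ℕ) : ZMod (n j))) →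
            normSq (hfam ξ) ≤ normSq h) →
        ∀ y : ((j : Fin r) → Fin (n j)) → ℂ,
          vecNorm ((DmatR γ n hfam * (DmatR γ n hfam * WmatR γ vhat n z
                - WmatR γ vhat n z * DmatR γ n hfam)
              - (DmatR γ n hfam * WmatR γ vhat n z
                - WmatR γ vhat n z * DmatR γ n hfam) * DmatR γ n hfam).mulVec y)
            ≤ c₂ * vecNorm (((DmatR γ n hfam + 1) ^ 2).mulVec y) := by
  have hg := summable_g hα vhat hv
  set g : (Fin d → ℤ) → ℝ := fun h => ‖vhat h‖ * PP h ^ 4 with hgdef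
  have hg0 : ∀ h, 0 ≤ g h := fun h => by
    have := one_le_PP h
    simp only [hgdef]; positivity
  have hvg : ∀ h, ‖vhat h‖ ≤ g h := fun h =>
    le_mul_of_one_le_right (norm_nonneg _) (one_le_pow₀ (one_le_PP h))
  have hvs : Summable fun h => ‖vhat h‖ := Summable.of_nonneg_of_le (fun _ => norm_nonneg _) hvg hg
  have hpi := Real.pi_pos
  set τ : ℝ := 2 * Real.pi ^ 2 * γ with hτdef
  have hτ : 0 < τ := by positivity
  set K : ℝ := 8 * τ ^ 2 * (1 + 1 / τ) * (1 + (d : ℝ)) ^ 4 with hK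
  have hK0 : 0 < K := by positivity
  have hT0 : 0 ≤ ∑' h, g h := tsum_nonneg hg0
  refine ⟨K / γ * (∑' h, g h) + 1, by positivity, ?_⟩
  intro n hn z hfam hcls hmin y
  set C : ((j : Fin r) → Fin (n j)) → ((j : Fin r) → Fin (n j)) → Set (Fin d → ℤ) :=
    fun ξ ξ' => {h | ∀ j, ((dotZ h (z j) : ZMod (n j)))
      = ((ξ j : ℕ) : ZMod (n j)) - ((ξ' j : ℕ) : ZMod (n j))} with hC
  have hle : K / γ * (∑' h, g h) * vecNorm (((DmatR γ n hfam + 1) ^ 2).mulVec y)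
      ≤ (K / γ * (∑' h, g h) + 1) * vecNorm (((DmatR γ n hfam + 1) ^ 2).mulVec y) :=
    mul_le_mul_of_nonneg_right (by linarith) (Real.sqrt_nonneg _)
  refine le_trans ?_ hle
  refine schur _ (fun ξ ξ' => K / γ * ∑' h : C ξ ξ', g h)
    (fun ξ' => (1 + τ * normSq (hfam ξ')) ^ 2) _ ?_ (by positivity) ?_ ?_ ?_ y _ ?_
  · intro ξ ξ'
    exact mul_nonneg (by positivity) (tsum_nonneg fun h => hg0 _)
  · intro ξ ξ'
    have e1 : (DmatR γ n hfam * (DmatR γ n hfam * WmatR γ vhat n z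
                - WmatR γ vhat n z * DmatR γ n hfam)
              - (DmatR γ n hfam * WmatR γ vhat n z
                - WmatR γ vhat n z * DmatR γ n hfam) * DmatR γ n hfam) ξ ξ'
        = (((τ * normSq (hfam ξ) - τ * normSq (hfam ξ')) ^ 2 : ℝ) : ℂ) * WmatR γ vhat n z ξ ξ' := by
      simp only [DmatR, Matrix.sub_apply, Matrix.diagonal_mul, Matrix.mul_diagonal]
      rw [hτdef]
      push_cast
      ring
    have e2 : ‖WmatR γ vhat n z ξ ξ'‖ ≤ 1 / γ * ∑' h : C ξ ξ', ‖vhat h‖ := by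
      simp only [WmatR, Matrix.of_apply]
      rw [norm_mul]
      refine mul_le_mul (le_of_eq ?_) ?_ (norm_nonneg _) (by positivity)
      · rw [norm_div, norm_one, Complex.norm_real, Real.norm_of_nonneg hγ.le]
      · exact norm_tsum_le_tsum_norm (hvs.subtype (C ξ ξ'))
    rw [e1, norm_mul, Complex.norm_real, Real.norm_of_nonneg (sq_nonneg _)]
    refine (mul_le_mul_of_nonneg_left e2 (sq_nonneg _)).trans ?_
    have e3 : (τ * normSq (hfam ξ) - τ * normSq (hfam ξ')) ^ 2 * ∑' h : C ξ ξ', ‖vhat h‖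
        ≤ K * (1 + τ * normSq (hfam ξ')) ^ 2 * ∑' h : C ξ ξ', g h := by
      rw [← tsum_mul_left, ← tsum_mul_left]
      refine Summable.tsum_le_tsum (fun h => ?_) ((hvs.subtype (C ξ ξ')).mul_left _)
        ((hg.subtype (C ξ ξ')).mul_left _)
      have hh : ∀ j, ((dotZ h.1 (z j) : ZMod (n j)))
        = ((ξ j : ℕ) : ZMod (n j)) - ((ξ' j : ℕ) : ZMod (n j)) := h.2
      have b1 : nm (hfam ξ) ≤ nm (hfam ξ') + nm h.1 := by
        refine (Real.sqrt_le_sqrt (hmin ξ (hfam ξ' + h.1) fun j => ?_)).trans (nm_add _ _)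
        rw [dotZ_add, Int.cast_add, hh, hcls]; ring
      have b2 : nm (hfam ξ') ≤ nm (hfam ξ) + nm h.1 := by
        refine (Real.sqrt_le_sqrt (hmin ξ' (hfam ξ - h.1) fun j => ?_)).trans (nm_sub _ _)
        rw [dotZ_sub, Int.cast_sub, hh, hcls]; ring
      have := key hτ (Real.sqrt_nonneg _) (Real.sqrt_nonneg _) (Real.sqrt_nonneg _) b1 b2
        (nm_le h.1)
      change (τ * nm (hfam ξ) ^ 2 - τ * nm (hfam ξ') ^ 2) ^ 2 ≤
        8 * τ ^ 2 * (1 + 1 / τ) * (1 + (d : ℝ)) ^ 4 * (1 + τ * nm (hfam ξ') ^ 2) ^ 2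
          * PP h.1 ^ 4 at this
      rw [nm_sq, nm_sq, ← hK] at this
      refine (mul_le_mul_of_nonneg_right this (norm_nonneg (vhat h.1))).trans (le_of_eq ?_)
      simp only [hgdef]; ring
    calc _ = 1 / γ * ((τ * normSq (hfam ξ) - τ * normSq (hfam ξ')) ^ 2
            * ∑' h : C ξ ξ', ‖vhat h‖) := by ring
      _ ≤ 1 / γ * (K * (1 + τ * normSq (hfam ξ')) ^ 2 * ∑' h : C ξ ξ', g h) :=
          mul_le_mul_of_nonneg_left e3 (by positivity)
      _ = _ := by ring
  · intro ξ
    rw [← Finset.mul_sum]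
    refine mul_le_mul_of_nonneg_left (sum_classes g hg hg0 (fun ξ' => C ξ ξ') ?_) (by positivity)
    intro a b x ha hb
    funext j
    have h1 := (ha j).symm.trans (hb j)
    exact fin_zmod_inj _ _ (sub_right_injective h1)
  · intro ξ'
    rw [← Finset.mul_sum]
    refine mul_le_mul_of_nonneg_left (sum_classes g hg hg0 (fun ξ => C ξ ξ') ?_) (by positivity)
    intro a b x ha hb
    funext j
    have h1 := (ha j).symm.trans (hb j)
    exact fin_zmod_inj _ _ (sub_left_injective h1)
  · intro ξ
    have e : (DmatR γ n hfam + 1) ^ 2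
        = Matrix.diagonal fun ξ => (((1 + τ * normSq (hfam ξ)) ^ 2 : ℝ) : ℂ) := by
      rw [DmatR, ← Matrix.diagonal_one, Matrix.diagonal_add, Matrix.diagonal_pow]
      congr 1
      funext ξ
      simp only [Pi.pow_apply]
      rw [hτdef]
      push_cast
      ring
    rw [e, Matrix.mulVec_diagonal, norm_mul, Complex.norm_real, Real.norm_of_nonneg (sq_nonneg _)]

end
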